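/- arXiv:2512.01168 — 2 statements merged into one kernel-verified Lean document; each statement's English description precedes it below -/
import Mathlib

section
/- Let d ≥ 1, δ ∈ (0,1], and let a : ℝ → 𝕊_δ be measurable. Then for every u ∈ C₀^∞(ℝ^{1+d}), ∫_{ℝ^{1+d}} ( |∂_t u(t,x)|² + δ² Σ_{i,j} |D_{ij}u(t,x)|² ) dx dt ≤ δ⁻² ∫_{ℝ^{1+d}} | ∂_t u(t,x) + Σ_{i,j} a^{ij}(t) D_{ij}u(t,x) |² dx dt. -/
open MeasureTheory Metric Set
open scoped ENNReal NNReal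

noncomputable section

abbrev Spc (d : ℕ) : Type := EuclideanSpace ℝ (Fin d)

abbrev Pt (d : ℕ) : Type := ℝ × Spc d

instance matrixMeasurableSpace (d : ℕ) : MeasurableSpace (Matrix (Fin d) (Fin d) ℝ) :=
  (inferInstance : MeasurableSpace (Fin d → Fin d → ℝ))

/-- Membership in `𝕊_δ`: symmetric `d×d` matrices with
`δ|ξ|² ≤ (aξ,ξ) ≤ δ⁻¹|ξ|²`. -/
def inS (d : ℕ) (δ : ℝ) (a : Matrix (Fin d) (Fin d) ℝ) : Prop :=
  a.IsSymm ∧ ∀ ξ : Fin d → ℝ,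
    δ * (∑ i, ξ i ^ 2) ≤ (∑ i, ∑ j, a i j * ξ i * ξ j) ∧
    (∑ i, ∑ j, a i j * ξ i * ξ j) ≤ δ⁻¹ * (∑ i, ξ i ^ 2)

/-- `{a,u} = a^{ij} a^{kr} u_{ik} u_{jr}`. -/
def bra (d : ℕ) (a u : Matrix (Fin d) (Fin d) ℝ) : ℝ :=
  ∑ i, ∑ j, ∑ k, ∑ r, a i j * a k r * u i k * u j r

/-- Frobenius norm of a `d×d` array. -/
def mnorm {d : ℕ} (m : Fin d → Fin d → ℝ) : ℝ :=
  Real.sqrt (∑ i, ∑ j, m i j ^ 2)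

/-- Euclidean norm of a vector given as `Fin d → ℝ`. -/
def vnorm {d : ℕ} (v : Fin d → ℝ) : ℝ :=
  Real.sqrt (∑ i, v i ^ 2)

/-- Parabolic cylinder `C_R(t,x) = (t, t+R²) × B_R(x)`. -/
def cyl (d : ℕ) (R t : ℝ) (x : Spc d) : Set (Pt d) :=
  Ioo t (t + R ^ 2) ×ˢ ball x R

/-- Time derivative `∂_t u`. -/
def Dt {d : ℕ} (u : Pt d → ℝ) (z : Pt d) : ℝ :=
  deriv (fun s => u (s, z.2)) z.1

/-- Spatial derivative `D_i u`. -/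
def Dx {d : ℕ} (i : Fin d) (u : Pt d → ℝ) (z : Pt d) : ℝ :=
  fderiv ℝ (fun y => u (z.1, y)) z.2 (EuclideanSpace.single i 1)

/-- Second spatial derivative `D_{ij} u = D_i D_j u`. -/
def Dxx {d : ℕ} (i j : Fin d) (u : Pt d → ℝ) : Pt d → ℝ :=
  Dx i (Dx j u)

/-- `u ∈ C₀^∞(ℝ^{1+d})`. -/
def CinfC {d : ℕ} (u : Pt d → ℝ) : Prop :=
  ContDiff ℝ (⊤ : ℕ∞) u ∧ HasCompactSupport u

/-- The kernel `p_{α,k}(s,r)`. -/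
def pak (d : ℕ) (α k s r : ℝ) : ℝ :=
  if 0 < s then s ^ (-((d : ℝ) + 2 - α) / 2) * Real.exp (-(r ^ 2) / (k * s)) else 0

/-- Parabolic distance to the origin `ρ(t,x) = |x| + √|t|`. -/
def prho {d : ℕ} (z : Pt d) : ℝ := ‖z.2‖ + Real.sqrt |z.1|

/-- Average of (the positive part of) `g` over `C`, valued in `ℝ≥0∞`. -/
def aveLin {d : ℕ} (C : Set (Pt d)) (g : Pt d → ℝ) : ℝ≥0∞ :=
  (volume C)⁻¹ * ∫⁻ z in C, ENNReal.ofReal (g z)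

/-- Parabolic maximal function `𝕄_β g` (for `g ≥ 0`). -/
def maxF {d : ℕ} (β : ℝ) (g : Pt d → ℝ) (z : Pt d) : ℝ≥0∞ :=
  ⨆ (ρ : ℝ) (_ : 0 < ρ) (t : ℝ) (x : Spc d) (_ : z ∈ cyl d ρ t x),
    ENNReal.ofReal (ρ ^ β) * aveLin (cyl d ρ t x) g

/-- Oscillation of a matrix-valued function over `C`. -/
def oscC {d : ℕ} (C : Set (Pt d)) (g : Pt d → Fin d → Fin d → ℝ) : ℝ :=
  ⨍ z₁ in C, ⨍ z₂ in C, mnorm (fun i j => g z₁ i j - g z₂ i j)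

/-- Mixed norm `‖f‖_{𝕃_{q,p}}` (inner integration in `t`, outer in `x`). -/
def mixedNorm {d : ℕ} (q p : ℝ) (f : Pt d → ℝ) : ℝ :=
  (∫ x : Spc d, (∫ t : ℝ, |f (t, x)| ^ q) ^ (p / q)) ^ (1 / p)

/-- Mixed norm on a set `Γ`. -/
def mixedNormOn {d : ℕ} (q p : ℝ) (Γ : Set (Pt d)) (f : Pt d → ℝ) : ℝ :=
  mixedNorm q p (Γ.indicator f)

/-- Normalized (averaged) mixed norm over the cylinder `C_R(t,x)`, in `ℝ≥0∞`. -/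
def cylNormL {d : ℕ} (q p R t : ℝ) (x : Spc d) (f : Pt d → ℝ) : ℝ≥0∞ :=
  ((volume (ball x R))⁻¹ * ∫⁻ y in ball x R,
      ((volume (Ioo t (t + R ^ 2)))⁻¹ * ∫⁻ s in Ioo t (t + R ^ 2),
        ENNReal.ofReal |f (s, y)| ^ q) ^ (p / q)) ^ (1 / p)

/-- Mixed norm on a set, valued in `ℝ≥0∞`. -/
def mixedNormLe {d : ℕ} (q p : ℝ) (Γ : Set (Pt d)) (f : Pt d → ℝ) : ℝ≥0∞ :=
  (∫⁻ x : Spc d, (∫⁻ t : ℝ, ENNReal.ofReal |Γ.indicator f (t, x)| ^ q) ^ (p / q)) ^ (1 / p)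

/-- `ã_C(t)`: average of `a(t,·)` over the ball of the cylinder. -/
def aTilde {d : ℕ} (a : Pt d → Matrix (Fin d) (Fin d) ℝ) (R : ℝ) (x₀ : Spc d) (t : ℝ)
    (i j : Fin d) : ℝ :=
  ⨍ y in ball x₀ R, a (t, y) i j

/-- The mean oscillation of `a` w.r.t. `x` over one cylinder. -/
def aSharpCyl {d : ℕ} (a : Pt d → Matrix (Fin d) (Fin d) ℝ) (R t₀ : ℝ) (x₀ : Spc d) : ℝ≥0∞ :=
  (volume (cyl d R t₀ x₀))⁻¹ * ∫⁻ z in cyl d R t₀ x₀,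
    ENNReal.ofReal (mnorm (fun i j => a z i j - aTilde a R x₀ z.1 i j))

/-- `a^♯`. -/
def aSharp {d : ℕ} (a : Pt d → Matrix (Fin d) (Fin d) ℝ) : ℝ≥0∞ :=
  ⨆ (R : ℝ) (_ : 0 < R) (t₀ : ℝ) (x₀ : Spc d), aSharpCyl a R t₀ x₀

/-- `a^♯_ρ` (only cylinders of radius `≤ ρa`). -/
def aSharpRho {d : ℕ} (a : Pt d → Matrix (Fin d) (Fin d) ℝ) (ρa : ℝ) : ℝ≥0∞ :=
  ⨆ (R : ℝ) (_ : 0 < R) (_ : R ≤ ρa) (t₀ : ℝ) (x₀ : Spc d), aSharpCyl a R t₀ x₀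

/-- Homogeneous Morrey norm `‖g‖_{Ė_{p,β}}`. -/
def morreyP {d : ℕ} (p β : ℝ) (g : Pt d → ℝ) : ℝ≥0∞ :=
  ⨆ (ρ : ℝ) (_ : 0 < ρ) (t : ℝ) (x : Spc d),
    ENNReal.ofReal (ρ ^ β) *
      ((volume (cyl d ρ t x))⁻¹ * ∫⁻ z in cyl d ρ t x, ENNReal.ofReal |g z| ^ p) ^ (1 / p)

/-- Homogeneous mixed-norm Morrey norm `‖g‖_{Ė_{q,p,β}}`. -/
def morreyQP {d : ℕ} (q p β : ℝ) (g : Pt d → ℝ) : ℝ≥0∞ :=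
  ⨆ (ρ : ℝ) (_ : 0 < ρ) (t : ℝ) (x : Spc d),
    ENNReal.ofReal (ρ ^ β) * cylNormL q p ρ t x g

/-- Inhomogeneous mixed-norm Morrey norm `‖g‖_{E_{q,p,β}}` (radii `ρ ∈ (0,1]`). -/
def morreyI {d : ℕ} (q p β : ℝ) (g : Pt d → ℝ) : ℝ≥0∞ :=
  ⨆ (ρ : ℝ) (_ : 0 < ρ) (_ : ρ ≤ 1) (t : ℝ) (x : Spc d),
    ENNReal.ofReal (ρ ^ β) * cylNormL q p ρ t x g

/-- `b̄_{q',p',ρb}` for a vector field `b`. -/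
def bBar {d : ℕ} (q' p' : ℝ) (b : Pt d → Fin d → ℝ) (ρb : ℝ) : ℝ≥0∞ :=
  ⨆ (R : ℝ) (_ : 0 < R) (_ : R ≤ ρb) (t : ℝ) (x : Spc d),
    ENNReal.ofReal R * cylNormL q' p' R t x (fun z => vnorm (b z))

/-- Test function supported in the open set `Q`. -/
def IsTest {d : ℕ} (Q : Set (Pt d)) (φ : Pt d → ℝ) : Prop :=
  ContDiff ℝ (⊤ : ℕ∞) φ ∧ HasCompactSupport φ ∧ tsupport φ ⊆ Q

/-- `ut` is the weak time derivative of `u` on `Q`. -/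
def WeakDtOn {d : ℕ} (Q : Set (Pt d)) (u ut : Pt d → ℝ) : Prop :=
  ∀ φ, IsTest Q φ → ∫ z in Q, u z * Dt φ z = - ∫ z in Q, ut z * φ z

/-- `ui` is the weak `i`-th spatial derivative of `u` on `Q`. -/
def WeakDxOn {d : ℕ} (Q : Set (Pt d)) (i : Fin d) (u ui : Pt d → ℝ) : Prop :=
  ∀ φ, IsTest Q φ → ∫ z in Q, u z * Dx i φ z = - ∫ z in Q, ui z * φ z

/-- Directional derivative. -/
def dirD {E : Type*} [NormedAddCommGroup E] [NormedSpace ℝ E] (v : E) (f : E → ℝ) : E → ℝ :=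
  fun z => fderiv ℝ f z v

/-- Smooth with compact support. -/
def SC {E : Type*} [NormedAddCommGroup E] [NormedSpace ℝ E] (f : E → ℝ) : Prop :=
  ContDiff ℝ (⊤ : ℕ∞) f ∧ HasCompactSupport f

section gen
variable {E : Type*} [NormedAddCommGroup E] [NormedSpace ℝ E]

lemma SC.dirD {f : E → ℝ} (hf : SC f) (v : E) : SC (dirD v f) := by
  refine ⟨?_, hf.2.fderiv_apply (𝕜 := ℝ) v⟩
  have h := hf.1.fderiv_right (m := (⊤ : ℕ∞)) (by simp)
  exact h.clm_apply contDiff_const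

lemma SC.diff {f : E → ℝ} (hf : SC f) : Differentiable ℝ f :=
  hf.1.differentiable (by simp)

lemma dirD_comm {f : E → ℝ} (hf : SC f) (v w : E) : dirD v (dirD w f) = dirD w (dirD v f) := by
  funext z
  have h1 : Differentiable ℝ (fderiv ℝ f) :=
    (hf.1.fderiv_right (m := (⊤ : ℕ∞)) (by simp)).differentiable (by simp)
  have key : ∀ v w : E, dirD v (dirD w f) z = fderiv ℝ (fderiv ℝ f) z v w := by
    intro v w
    unfold dirD
    rw [fderiv_clm_apply (h1 z) (differentiableAt_const w)]
    simp
  rw [key, key]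
  exact (((contDiff_infty.1 hf.1 2).contDiffAt).isSymmSndFDerivAt (by simp)).eq v w

variable [MeasurableSpace E] [BorelSpace E] [FiniteDimensional ℝ E] {μ : Measure E}
  [μ.IsAddHaarMeasure]

lemma SC.int_mul {f g : E → ℝ} (hf : SC f) (hg : SC g) : Integrable (fun x => f x * g x) μ :=
  (hf.1.continuous.mul hg.1.continuous).integrable_of_hasCompactSupport hf.2.mul_right

lemma SC.ibp {f g : E → ℝ} (hf : SC f) (hg : SC g) (v : E) :
    ∫ x, f x * _root_.dirD v g x ∂μ = - ∫ x, _root_.dirD v f x * g x ∂μ :=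
  integral_mul_fderiv_eq_neg_fderiv_mul_of_integrable
    ((hf.dirD v).int_mul hg) (hf.int_mul (hg.dirD v)) (hf.int_mul hg)
    (fun x _ => hf.diff x) (fun x _ => hg.diff x)

lemma SC.swap {f : E → ℝ} (hf : SC f) (a b c e : E) :
    ∫ x, _root_.dirD a (_root_.dirD b f) x * _root_.dirD c (_root_.dirD e f) x ∂μ =
      ∫ x, _root_.dirD a (_root_.dirD c f) x * _root_.dirD b (_root_.dirD e f) x ∂μ := by
  rw [((hf.dirD b).dirD a).ibp (hf.dirD e) c, ((hf.dirD c).dirD a).ibp (hf.dirD e) b,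
    dirD_comm hf a b, dirD_comm hf a c, dirD_comm (hf.dirD a) c b]

lemma SC.zero {f : E → ℝ} (hf : SC f) (v w : E) :
    ∫ x, _root_.dirD v f x * _root_.dirD w (_root_.dirD w f) x ∂μ = 0 := by
  rw [(hf.dirD v).ibp (hf.dirD w) w, dirD_comm hf w v]
  have h := (hf.dirD w).ibp (μ := μ) (hf.dirD w) v
  simp only [mul_comm (_root_.dirD w f _)] at h
  linarith

end gen

open scoped MatrixOrder in
lemma psd_factor {d : ℕ} (S : Matrix (Fin d) (Fin d) ℝ) (hs : S.IsSymm)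
    (hS : ∀ ξ : Fin d → ℝ, 0 ≤ ∑ i, ∑ j, S i j * ξ i * ξ j) :
    ∃ B : Matrix (Fin d) (Fin d) ℝ, ∀ k l, S k l = ∑ m, B m k * B m l := by
  have hA : S.PosSemidef := by
    refine Matrix.PosSemidef.of_dotProduct_mulVec_nonneg (by rw [Matrix.IsHermitian, Matrix.conjTranspose_eq_transpose_of_trivial]; exact hs) ?_
    intro x
    refine (hS x).trans_eq ?_
    simp only [dotProduct, Matrix.mulVec, Finset.mul_sum, star_trivial]
    refine Finset.sum_congr rfl fun i _ => Finset.sum_congr rfl fun j _ => by ring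
  obtain ⟨X, hX, -, h⟩ := sub_zero S ▸
    CFC.exists_sqrt_of_isSelfAdjoint_of_quasispectrumRestricts hA.isHermitian
          (QuasispectrumRestricts.nnreal_of_nonneg hA.nonneg)
  refine ⟨X, fun k l => ?_⟩
  have hX' : ∀ i j, X j i = X i j := fun i j => by
    simpa [Matrix.star_apply] using congrFun (congrFun hX.star_eq i) j
  rw [sub_zero] at h
  rw [← h, Matrix.mul_apply]
  exact Finset.sum_congr rfl fun m _ => by rw [hX' m k]

lemma psd_pair {d : ℕ} (P S H : Matrix (Fin d) (Fin d) ℝ) (hs : S.IsSymm)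
    (hP : ∀ ξ : Fin d → ℝ, 0 ≤ ∑ i, ∑ j, P i j * ξ i * ξ j)
    (hS : ∀ ξ : Fin d → ℝ, 0 ≤ ∑ i, ∑ j, S i j * ξ i * ξ j) :
    0 ≤ ∑ i, ∑ j, ∑ k, ∑ l, P i j * S k l * (H i k * H j l) := by
  obtain ⟨B, hB⟩ := psd_factor S hs hS
  have : ∑ i, ∑ j, ∑ k, ∑ l, P i j * S k l * (H i k * H j l) =
      ∑ m, ∑ i, ∑ j, P i j * (∑ k, B m k * H i k) * (∑ l, B m l * H j l) := by
    rw [Finset.sum_comm]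
    conv_rhs => rw [Finset.sum_comm]; enter [2, i]; rw [Finset.sum_comm]
    rw [Finset.sum_comm]
    refine Finset.sum_congr rfl fun i _ => Finset.sum_congr rfl fun j _ => ?_
    simp only [hB, Finset.mul_sum, Finset.sum_mul]
    rw [Finset.sum_comm]
    conv_rhs => rw [Finset.sum_comm]; enter [2, i]; rw [Finset.sum_comm]
    refine Finset.sum_congr rfl fun i _ => Finset.sum_congr rfl fun j _ =>
      Finset.sum_congr rfl fun k _ => by ring
  rw [this]
  exact Finset.sum_nonneg fun m _ => hP _

/-- coordinate direction in space -/
abbrev ev {d : ℕ} (i : Fin d) : Spc d := EuclideanSpace.single i 1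

lemma Dt_eq {d : ℕ} {u : Pt d → ℝ} (hu : SC u) : Dt u = dirD ((1 : ℝ), (0 : Spc d)) u := by
  funext z
  have h : HasDerivAt (fun s : ℝ => (s, z.2)) ((1 : ℝ), (0 : Spc d)) z.1 :=
    (hasDerivAt_id z.1).prodMk (hasDerivAt_const z.1 z.2)
  exact ((hu.diff z).hasFDerivAt.comp_hasDerivAt z.1 h).deriv

lemma Dx_eq {d : ℕ} {u : Pt d → ℝ} (hu : SC u) (i : Fin d) :
    Dx i u = dirD ((0 : ℝ), ev i) u := by
  funext z
  have h : HasFDerivAt (fun y : Spc d => (z.1, y)) (ContinuousLinearMap.inr ℝ ℝ (Spc d)) z.2 :=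
    hasFDerivAt_prodMk_right z.1 z.2
  have h2 := ((hu.diff z).hasFDerivAt.comp z.2 h).fderiv
  unfold Dx dirD
  change fderiv ℝ (u ∘ fun y : Spc d => (z.1, y)) z.2 _ = _
  rw [h2]
  simp [ev]

lemma Dxx_eq {d : ℕ} {u : Pt d → ℝ} (hu : SC u) (i j : Fin d) :
    Dxx i j u = dirD ((0 : ℝ), ev i) (dirD ((0 : ℝ), ev j) u) := by
  unfold Dxx
  rw [Dx_eq hu, Dx_eq (hu.dirD _)]

lemma slice_SC {d : ℕ} {u : Pt d → ℝ} (hu : SC u) (t : ℝ) : SC (fun y : Spc d => u (t, y)) := by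
  refine ⟨hu.1.comp (contDiff_prodMk_right t), ?_⟩
  refine hu.2.comp_isClosedEmbedding (g := fun y : Spc d => (t, y)) ?_
  exact Topology.IsClosedEmbedding.of_continuous_injective_isClosedMap (by fun_prop)
    (fun x y h => by simpa using h) (isClosedMap_prodMk_left t)

lemma slice_nonneg {d : ℕ} {u : Pt d → ℝ} (hu : SC u) (t : ℝ)
    (P S : Matrix (Fin d) (Fin d) ℝ) (hs : S.IsSymm)
    (hP : ∀ ξ : Fin d → ℝ, 0 ≤ ∑ i, ∑ j, P i j * ξ i * ξ j)
    (hS : ∀ ξ : Fin d → ℝ, 0 ≤ ∑ i, ∑ j, S i j * ξ i * ξ j) :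
    0 ≤ ∫ y : Spc d, (∑ i, ∑ j, P i j * Dxx i j u (t, y)) * (∑ i, ∑ j, S i j * Dxx i j u (t, y)) := by
  have hv := slice_SC hu t
  set v : Spc d → ℝ := fun y => u (t, y) with hvdef
  set H : Fin d → Fin d → Spc d → ℝ := fun i j => dirD (ev i) (dirD (ev j) v) with hH
  have hD : ∀ i j y, Dxx i j u (t, y) = H i j y := fun i j y => rfl
  have hHS : ∀ i j, SC (H i j) := fun i j => (hv.dirD _).dirD _
  simp only [hD]
  have hint : ∀ i j k l, Integrable (fun y => P i j * S k l * (H i j y * H k l y)) :=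
    fun i j k l => ((hHS i j).int_mul (hHS k l)).const_mul _
  have hint2 : ∀ i j k l, Integrable (fun y => P i j * S k l * (H i k y * H j l y)) :=
    fun i j k l => ((hHS i k).int_mul (hHS j l)).const_mul _
  have e1 : ∀ y, (∑ i, ∑ j, P i j * H i j y) * (∑ i, ∑ j, S i j * H i j y) =
      ∑ i, ∑ j, ∑ k, ∑ l, P i j * S k l * (H i j y * H k l y) := by
    intro y
    simp only [Finset.sum_mul]
    simp only [Finset.mul_sum]
    refine Finset.sum_congr rfl fun i _ => Finset.sum_congr rfl fun j _ =>
      Finset.sum_congr rfl fun k _ => Finset.sum_congr rfl fun l _ => by ring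
  have e2 : ∫ y, ∑ i, ∑ j, ∑ k, ∑ l, P i j * S k l * (H i j y * H k l y) =
      ∫ y, ∑ i, ∑ j, ∑ k, ∑ l, P i j * S k l * (H i k y * H j l y) := by
    have big : ∀ F : Fin d → Fin d → Fin d → Fin d → Spc d → ℝ,
        (∀ i j k l, Integrable (F i j k l)) →
        ∫ y, ∑ i, ∑ j, ∑ k, ∑ l, F i j k l y = ∑ i, ∑ j, ∑ k, ∑ l, ∫ y, F i j k l y := by
      intro F hF
      rw [integral_finsetSum _ fun i _ => integrable_finsetSum _ fun j _ =>
        integrable_finsetSum _ fun k _ => integrable_finsetSum _ fun l _ => hF i j k l]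
      refine Finset.sum_congr rfl fun i _ => ?_
      rw [integral_finsetSum _ fun j _ =>
        integrable_finsetSum _ fun k _ => integrable_finsetSum _ fun l _ => hF i j k l]
      refine Finset.sum_congr rfl fun j _ => ?_
      rw [integral_finsetSum _ fun k _ => integrable_finsetSum _ fun l _ => hF i j k l]
      refine Finset.sum_congr rfl fun k _ => ?_
      rw [integral_finsetSum _ fun l _ => hF i j k l]
    rw [big (fun i j k l y => P i j * S k l * (H i j y * H k l y)) hint,
      big (fun i j k l y => P i j * S k l * (H i k y * H j l y)) hint2]
    refine Finset.sum_congr rfl fun i _ => Finset.sum_congr rfl fun j _ =>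
      Finset.sum_congr rfl fun k _ => Finset.sum_congr rfl fun l _ => ?_
    rw [integral_const_mul, integral_const_mul, hv.swap (ev i) (ev j) (ev k) (ev l)]
  simp only [e1]
  rw [e2]
  exact integral_nonneg fun y => psd_pair P S (fun i j => H i j y) hs hP hS

lemma quad_pair {d : ℕ} (a : Matrix (Fin d) (Fin d) ℝ) (hs : a.IsSymm) (i j : Fin d) (c : ℝ) :
    ∑ k, ∑ l, a k l * (Pi.single i 1 + Pi.single j c : Fin d → ℝ) k
      * (Pi.single i 1 + Pi.single j c : Fin d → ℝ) l = a i i + 2 * c * a i j + c ^ 2 * a j j := by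
  have := hs.apply i j
  simp only [Pi.add_apply, mul_add, add_mul, Finset.sum_add_distrib, Pi.single_apply]
  simp
  rw [this]; ring

lemma one_pair {d : ℕ} (i j : Fin d) (c : ℝ) :
    ∑ k, (Pi.single i 1 + Pi.single j c : Fin d → ℝ) k ^ 2 =
      1 + 2 * c * (if i = j then 1 else 0) + c ^ 2 := by
  simp only [Pi.add_apply, add_sq, Finset.sum_add_distrib, Pi.single_apply]
  simp [ite_pow]
  split_ifs <;> simp_all

lemma inS_bound {d : ℕ} {δ : ℝ} (hδ : 0 < δ) {a : Matrix (Fin d) (Fin d) ℝ} (ha : inS d δ a)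
    (i j : Fin d) : |a i j| ≤ 2 * δ⁻¹ := by
  have h0 : ∀ k, 0 ≤ a k k ∧ a k k ≤ δ⁻¹ := fun k => by
    have h := ha.2 (Pi.single k 1 + Pi.single k 0)
    rw [quad_pair a ha.1, one_pair] at h
    simp at h
    exact ⟨by linarith [h.1], h.2⟩
  have h1 := (ha.2 (Pi.single i 1 + Pi.single j 1)).1
  have h2 := (ha.2 (Pi.single i 1 + Pi.single j (-1))).1
  have h3 := h0 i
  have h4 := h0 j
  have h1' : 0 ≤ δ * ∑ k, (Pi.single i 1 + Pi.single j 1 : Fin d → ℝ) k ^ 2 := by positivity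
  have h2' : 0 ≤ δ * ∑ k, (Pi.single i 1 + Pi.single j (-1) : Fin d → ℝ) k ^ 2 := by positivity
  rw [quad_pair a ha.1] at h1 h2
  rw [abs_le]
  constructor <;> linarith

lemma inS_one {d : ℕ} {a : Matrix (Fin d) (Fin d) ℝ} (ha : inS d 1 a) (i j : Fin d) :
    a i j = if i = j then 1 else 0 := by
  have h0 : ∀ k, a k k = 1 := fun k => by
    have h := ha.2 (Pi.single k 1 + Pi.single k 0)
    rw [quad_pair a ha.1, one_pair] at h
    simp at h
    linarith [h.1, h.2]
  have h := ha.2 (Pi.single i 1 + Pi.single j 1)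
  rw [quad_pair a ha.1, one_pair, h0, h0] at h
  norm_num at h
  split_ifs at h ⊢ <;> linarith [h.1, h.2]

lemma quad_shift {d : ℕ} (a : Matrix (Fin d) (Fin d) ℝ) (α β : ℝ) (ξ : Fin d → ℝ) :
    ∑ i, ∑ j, (α * a i j + β * (if i = j then 1 else 0)) * ξ i * ξ j =
      α * (∑ i, ∑ j, a i j * ξ i * ξ j) + β * ∑ i, ξ i ^ 2 := by
  simp only [add_mul, Finset.sum_add_distrib, Finset.mul_sum]
  congr 1
  · exact Finset.sum_congr rfl fun i _ => Finset.sum_congr rfl fun j _ => by ring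
  · exact Finset.sum_congr rfl fun i _ => by simp [sq, mul_assoc]

lemma lin_shift {d : ℕ} (a : Matrix (Fin d) (Fin d) ℝ) (α β : ℝ) (H : Fin d → Fin d → ℝ) :
    ∑ i, ∑ j, (α * a i j + β * (if i = j then 1 else 0)) * H i j =
      α * (∑ i, ∑ j, a i j * H i j) + β * ∑ i, H i i := by
  simp only [add_mul, Finset.sum_add_distrib, Finset.mul_sum]
  congr 1
  · exact Finset.sum_congr rfl fun i _ => Finset.sum_congr rfl fun j _ => by ring
  · exact Finset.sum_congr rfl fun i _ => by simp

lemma SC.memLp {E : Type*} [NormedAddCommGroup E] [NormedSpace ℝ E] [MeasurableSpace E]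
    [BorelSpace E] [FiniteDimensional ℝ E] {μ : Measure E} [μ.IsAddHaarMeasure]
    {f : E → ℝ} (hf : SC f) : MemLp f 2 μ :=
  hf.1.continuous.memLp_of_hasCompactSupport hf.2

theorem stmt1 (d : ℕ) (hd : 1 ≤ d) (δ : ℝ) (hδ0 : 0 < δ) (hδ1 : δ ≤ 1)
    (a : ℝ → Matrix (Fin d) (Fin d) ℝ) (ham : Measurable a) (haS : ∀ t, inS d δ (a t))
    (u : Pt d → ℝ) (hu : CinfC u) :
    (∫ z : Pt d, ((Dt u z) ^ 2 + δ ^ 2 * ∑ i, ∑ j, (Dxx i j u z) ^ 2)) ≤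
      δ⁻¹ ^ 2 * ∫ z : Pt d, (Dt u z + ∑ i, ∑ j, a z.1 i j * Dxx i j u z) ^ 2 := by
  have hu' : SC u := hu
  haveI : (volume : Measure (Pt d)).IsAddHaarMeasure := by
    rw [Measure.volume_eq_prod]; infer_instance
  set p : Pt d → ℝ := Dt u with hp
  set q : Pt d → ℝ := fun z => ∑ i, Dxx i i u z with hq
  set g : Pt d → ℝ := fun z => ∑ i, ∑ j, a z.1 i j * Dxx i j u z with hg
  set h : Pt d → ℝ := fun z => g z - δ * q z with hh
  have hHS : ∀ i j, SC (Dxx i j u) := fun i j => by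
    rw [Dxx_eq hu']; exact (hu'.dirD _).dirD _
  have hpS : SC p := by rw [hp, Dt_eq hu']; exact hu'.dirD _
  have Lp : MemLp p 2 volume := hpS.memLp
  have LH : ∀ i j, MemLp (Dxx i j u) 2 volume := fun i j => (hHS i j).memLp
  have Lq : MemLp q 2 volume := memLp_finsetSum _ fun i _ => LH i i
  have hmeas : ∀ i j, Measurable fun z : Pt d => a z.1 i j := fun i j => by
    have h1 : Measurable fun t => a t i j :=
      (measurable_pi_apply j).comp ((measurable_pi_apply i).comp ham)
    exact h1.comp measurable_fst
  have Lg : MemLp g 2 volume := by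
    refine memLp_finsetSum _ fun i _ => memLp_finsetSum _ fun j _ => ?_
    refine (LH i j).of_le_mul (c := 2 * δ⁻¹)
      ((hmeas i j).aestronglyMeasurable.mul (LH i j).1) (Filter.Eventually.of_forall fun z => ?_)
    rw [norm_mul]
    exact mul_le_mul_of_nonneg_right (inS_bound hδ0 (haS z.1) i j) (norm_nonneg _)
  have Lh : MemLp h 2 volume := Lg.sub (Lq.const_mul δ)
  have Lf : MemLp (fun z => p z + g z) 2 volume := Lp.add Lg
  have Ipp : Integrable (fun z => p z ^ 2) := Lp.integrable_sq
  have Iqq : Integrable (fun z => q z ^ 2) := Lq.integrable_sq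
  have Iff' : Integrable (fun z => (p z + g z) ^ 2) := Lf.integrable_sq
  have Ipq : Integrable (fun z => p z * q z) := Lp.integrable_mul Lq
  have IH : ∀ i j, Integrable (fun z => (Dxx i j u z) ^ 2) := fun i j => (LH i j).integrable_sq
  have IHs : Integrable (fun z => ∑ i, ∑ j, (Dxx i j u z) ^ 2) :=
    integrable_finsetSum _ fun i _ => integrable_finsetSum _ fun j _ => IH i j
  have Zpq : ∫ z, p z * q z = 0 := by
    simp only [hq, Finset.mul_sum]
    rw [integral_finsetSum _ fun i _ => hpS.int_mul (hHS i i)]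
    refine Finset.sum_eq_zero fun i _ => ?_
    rw [hp, Dt_eq hu', Dxx_eq hu']
    exact hu'.zero _ _
  have Zqq : ∫ z, q z ^ 2 = ∫ z, ∑ i, ∑ j, (Dxx i j u z) ^ 2 := by
    simp only [hq, sq, Finset.sum_mul_sum]
    rw [integral_finsetSum _ fun i _ => integrable_finsetSum _ fun j _ =>
        (hHS i i).int_mul (hHS j j),
      integral_finsetSum _ fun i _ => integrable_finsetSum _ fun j _ =>
        (hHS i j).int_mul (hHS i j)]
    refine Finset.sum_congr rfl fun i _ => ?_
    rw [integral_finsetSum _ fun j _ => (hHS i i).int_mul (hHS j j),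
      integral_finsetSum _ fun j _ => (hHS i j).int_mul (hHS i j)]
    refine Finset.sum_congr rfl fun j _ => ?_
    simp only [Dxx_eq hu']
    rw [hu'.swap]
  set A : ℝ := 1 - δ ^ 2 with hA
  have hA0 : 0 ≤ A := by nlinarith
  have Ihs : Integrable (fun z => h z * (2 * A * q z - δ * h z)) :=
    Lh.integrable_mul ((Lq.const_mul (2 * A)).sub (Lh.const_mul δ))
  have Zhs : 0 ≤ ∫ z, h z * (2 * A * q z - δ * h z) := by
    rw [Measure.volume_eq_prod] at Ihs ⊢
    rw [integral_prod _ Ihs]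
    refine integral_nonneg fun t => ?_
    have hS := (haS t).2
    have hdel : δ * δ⁻¹ = 1 := mul_inv_cancel₀ hδ0.ne'
    have key := slice_nonneg hu' t
      (Matrix.of fun i j => 1 * a t i j + (-δ) * (if i = j then 1 else 0))
      (Matrix.of fun i j => (-δ) * a t i j + (2 - δ ^ 2) * (if i = j then 1 else 0))
      (by
        ext i j
        simp only [Matrix.transpose_apply, Matrix.of_apply, (haS t).1.apply i j, eq_comm])
      (fun ξ => by
        simp only [Matrix.of_apply]
        rw [quad_shift]
        linarith [(hS ξ).1])
      (fun ξ => by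
        simp only [Matrix.of_apply]
        rw [quad_shift]
        have h1 := mul_le_mul_of_nonneg_left (hS ξ).2 hδ0.le
        rw [← mul_assoc, hdel] at h1
        have h2 : 0 ≤ ∑ i, ξ i ^ 2 := by positivity
        nlinarith [mul_nonneg hA0 h2])
    refine key.trans_eq (integral_congr_ae (Filter.Eventually.of_forall fun y => ?_))
    simp only [Matrix.of_apply]
    rw [lin_shift, lin_shift]
    simp only [hh, hg, hq, hA]
    ring
  have main : δ ^ 2 * ∫ z, p z ^ 2 + q z ^ 2 ≤ ∫ z, (p z + g z) ^ 2 := by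
    rw [integral_add Ipp Iqq]
    rcases hA0.lt_or_eq with hpos | hz
    · have e : ∀ z, A * ((p z + g z) ^ 2 - δ ^ 2 * p z ^ 2 - δ ^ 2 * q z ^ 2
          - 2 * δ * (p z * q z)) = (A * p z + h z) ^ 2 + δ * (h z * (2 * A * q z - δ * h z)) := by
        intro z
        have : g z = h z + δ * q z := by simp [hh]
        rw [this, hA]; ring
      have i1 : ∫ z, A * ((p z + g z) ^ 2 - δ ^ 2 * p z ^ 2 - δ ^ 2 * q z ^ 2
          - 2 * δ * (p z * q z)) = A * ((∫ z, (p z + g z) ^ 2) - δ ^ 2 * (∫ z, p z ^ 2)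
            - δ ^ 2 * (∫ z, q z ^ 2)) := by
        have J1 : Integrable (fun z => (p z + g z) ^ 2 - δ ^ 2 * p z ^ 2) :=
          Iff'.sub (Ipp.const_mul _)
        have J2 : Integrable (fun z => (p z + g z) ^ 2 - δ ^ 2 * p z ^ 2 - δ ^ 2 * q z ^ 2) :=
          J1.sub (Iqq.const_mul _)
        rw [integral_const_mul, integral_sub J2
          (Ipq.const_mul _), integral_sub J1 (Iqq.const_mul _),
          integral_sub Iff' (Ipp.const_mul _), integral_const_mul, integral_const_mul,
          integral_const_mul, Zpq]
        ring
      have Isq : Integrable (fun z => (A * p z + h z) ^ 2) :=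
        ((Lp.const_mul A).add Lh).integrable_sq
      have i2 : 0 ≤ ∫ z, (A * p z + h z) ^ 2 + δ * (h z * (2 * A * q z - δ * h z)) := by
        rw [integral_add Isq (Ihs.const_mul _), integral_const_mul]
        exact add_nonneg (integral_nonneg fun z => sq_nonneg _) (mul_nonneg hδ0.le Zhs)
      simp only [← e] at i2
      rw [i1] at i2
      have := nonneg_of_mul_nonneg_right i2 hpos
      linarith
    · have hδ : δ = 1 := by nlinarith
      subst hδ
      have hgq : ∀ z, g z = q z := fun z => by
        simp only [hg, hq]
        refine Finset.sum_congr rfl fun i _ => ?_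
        simp [inS_one (haS z.1)]
      have : ∀ z, (p z + g z) ^ 2 = p z ^ 2 + q z ^ 2 + 2 * (p z * q z) := fun z => by
        rw [hgq]; ring
      simp only [this]
      have J1 : Integrable (fun z => p z ^ 2 + q z ^ 2) := Ipp.add Iqq
      rw [integral_add J1 (Ipq.const_mul _), integral_add Ipp Iqq, integral_const_mul,
        Zpq]
      linarith
  have fin : ∫ z, (p z ^ 2 + δ ^ 2 * ∑ i, ∑ j, (Dxx i j u z) ^ 2) ≤ ∫ z, p z ^ 2 + q z ^ 2 := by
    rw [integral_add Ipp (IHs.const_mul _), integral_add Ipp Iqq, integral_const_mul, ← Zqq]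
    have : 0 ≤ ∫ z, q z ^ 2 := integral_nonneg fun z => sq_nonneg _
    nlinarith
  refine fin.trans ?_
  rw [inv_pow, inv_mul_eq_div, le_div_iff₀ (by positivity), mul_comm]
  exact main
end
end

section
/- Let d ≥ 1, k > 0 and α ∈ (0, d+2]. Let f : ℝ^{1+d} → ℝ be a bounded measurable function with compact support. Then there is a constant N (depending on d, α, k and f) such that for all (t,x) ∈ ℝ^{1+d}, P_{α,k}|f|(t,x) := ∫_{ℝ^{1+d}} p_{α,k}(s,|y|) |f(t+s, x+y)| dy ds ≤ N (1 + ρ(t,x))^{−(d+2−α)}. -/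
open MeasureTheory Metric Set
open scoped ENNReal NNReal

noncomputable section

lemma aux_exp (k γ : ℝ) (hk : 0 < k) (hγ : 0 ≤ γ) :
    ∃ C : ℝ, 0 < C ∧ ∀ v : ℝ, 0 ≤ v → (1 + v) ^ γ * Real.exp (-(v / k)) ≤ C := by
  set B : ℝ := 1 + k * (γ + 1) with hB
  have hkg : 0 < k * (γ + 1) := by positivity
  have hBpos : 0 < B := by positivity
  refine ⟨B ^ γ, by positivity, fun v hv => ?_⟩
  have h1 : 1 + v ≤ B * Real.exp (v / (k * (γ + 1))) := by
    have h2 := Real.add_one_le_exp (v / (k * (γ + 1)))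
    have h3 : 0 ≤ v / (k * (γ + 1)) := by positivity
    have h4 : k * (γ + 1) * (v / (k * (γ + 1))) = v := by field_simp
    have h5 : B * (v / (k * (γ + 1)) + 1) ≤ B * Real.exp (v / (k * (γ + 1))) := by gcongr
    have h6 : B * (v / (k * (γ + 1)) + 1) = v / (k * (γ + 1)) + 1 + v + k * (γ + 1) := by
      rw [hB]; linear_combination h4
    linarith
  have h7 : (1 + v) ^ γ ≤ B ^ γ * Real.exp (v / k) := by
    calc (1 + v) ^ γ ≤ (B * Real.exp (v / (k * (γ + 1)))) ^ γ :=
          Real.rpow_le_rpow (by linarith) h1 hγ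
      _ = B ^ γ * Real.exp (v / (k * (γ + 1)) * γ) := by
          rw [Real.mul_rpow hBpos.le (Real.exp_pos _).le, Real.exp_mul]
      _ ≤ B ^ γ * Real.exp (v / k) := by
          gcongr
          have : v / (k * (γ + 1)) * γ = (v / k) * (γ / (γ + 1)) := by field_simp
          rw [this]
          have h8 : γ / (γ + 1) ≤ 1 := by rw [div_le_one (by linarith)]; linarith
          exact mul_le_of_le_one_right (by positivity) h8
  calc (1 + v) ^ γ * Real.exp (-(v / k)) ≤ B ^ γ * Real.exp (v / k) * Real.exp (-(v / k)) := by
        gcongr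
    _ = B ^ γ := by rw [mul_assoc, ← Real.exp_add]; simp

lemma pak_bound (d : ℕ) (k : ℝ) (hk : 0 < k) (α : ℝ) (hα : α ≤ (d : ℝ) + 2) :
    ∃ C : ℝ, 0 < C ∧ ∀ s r q : ℝ, 0 ≤ r → 0 < q → q ≤ r + Real.sqrt |s| →
      pak d α k s r ≤ C * q ^ (-((d : ℝ) + 2 - α)) := by
  set β : ℝ := (d : ℝ) + 2 - α with hβ
  have hβ0 : 0 ≤ β := by linarith
  obtain ⟨C, hC, hCb⟩ := aux_exp k (β / 2) hk (by linarith)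
  refine ⟨2 ^ (β / 2) * C, by positivity, fun s r q hr hq hqr => ?_⟩
  unfold pak
  split_ifs with hs
  · rw [abs_of_pos hs] at hqr
    have hsq : Real.sqrt s ^ 2 = s := Real.sq_sqrt hs.le
    have h1 : q ^ 2 ≤ 2 * s * (1 + r ^ 2 / s) := by
      have : 2 * s * (1 + r ^ 2 / s) = 2 * s + 2 * r ^ 2 := by field_simp
      rw [this]
      have : q ^ 2 ≤ (r + Real.sqrt s) ^ 2 := by gcongr
      nlinarith [sq_nonneg (r - Real.sqrt s)]
    have h2 : q ^ β ≤ 2 ^ (β / 2) * s ^ (β / 2) * (1 + r ^ 2 / s) ^ (β / 2) := by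
      have : q ^ β = (q ^ 2) ^ (β / 2) := by
        rw [← Real.rpow_natCast, ← Real.rpow_mul hq.le]; congr 1; push_cast; ring
      rw [this, ← Real.mul_rpow (by norm_num) hs.le, ← Real.mul_rpow (by positivity) (by positivity)]
      exact Real.rpow_le_rpow (by positivity) h1 (by linarith)
    have h3 := hCb (r ^ 2 / s) (by positivity)
    have e1 : -(r ^ 2) / (k * s) = -(r ^ 2 / s / k) := by field_simp
    have e2 : s ^ (-β / 2) = (s ^ (β / 2))⁻¹ := by rw [← Real.rpow_neg hs.le]; congr 1; ring
    rw [e1, e2, Real.rpow_neg hq.le, ← div_eq_mul_inv, le_div_iff₀ (by positivity)]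
    have hsp : 0 < s ^ (β / 2) := by positivity
    calc (s ^ (β / 2))⁻¹ * Real.exp (-(r ^ 2 / s / k)) * q ^ β
        ≤ (s ^ (β / 2))⁻¹ * Real.exp (-(r ^ 2 / s / k)) *
          (2 ^ (β / 2) * s ^ (β / 2) * (1 + r ^ 2 / s) ^ (β / 2)) := by gcongr
      _ = 2 ^ (β / 2) * ((1 + r ^ 2 / s) ^ (β / 2) * Real.exp (-(r ^ 2 / s / k))) := by
          field_simp
      _ ≤ 2 ^ (β / 2) * C := by gcongr
  · positivity

lemma gauss_lint (d : ℕ) (b : ℝ) (hb : 0 < b) :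
    ∫⁻ y : Spc d, ENNReal.ofReal (Real.exp (-b * ‖y‖ ^ 2)) =
      ENNReal.ofReal ((Real.pi / b) ^ ((d : ℝ) / 2)) := by
  have h := GaussianFourier.integral_rexp_neg_mul_sq_norm (V := Spc d) hb
  rw [finrank_euclideanSpace_fin] at h
  have hpos : 0 < (Real.pi / b) ^ ((d : ℝ) / 2) := by have := Real.pi_pos; positivity
  have hi : Integrable (fun v : Spc d => Real.exp (-b * ‖v‖ ^ 2)) := by
    by_contra hn
    rw [integral_undef hn] at h
    linarith
  rw [← h, ofReal_integral_eq_lintegral_ofReal hi]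
  exact Filter.Eventually.of_forall fun _ => (Real.exp_pos _).le

lemma pak_meas (d : ℕ) (α k : ℝ) : Measurable (fun w : Pt d => pak d α k w.1 ‖w.2‖) := by
  unfold pak
  apply Measurable.ite (measurableSet_lt measurable_const measurable_fst)
  · fun_prop
  · fun_prop

lemma near_fin (d : ℕ) (k : ℝ) (hk : 0 < k) (α : ℝ) (hα0 : 0 < α) (T : ℝ) (hT : 0 ≤ T) :
    ∫⁻ w in ({w : Pt d | w.1 ≤ T}), ENNReal.ofReal (pak d α k w.1 ‖w.2‖) < ∞ := by
  have hS : ({w : Pt d | w.1 ≤ T}) = Iic T ×ˢ univ := by ext; simp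
  rw [hS, Measure.volume_eq_prod, ← Measure.prod_restrict, Measure.restrict_univ,
    lintegral_prod _ (pak_meas d α k).ennreal_ofReal.aemeasurable]
  set c : ℝ := (Real.pi * k) ^ ((d : ℝ) / 2)
  have h1 : ∀ s : ℝ, ∫⁻ y : Spc d, ENNReal.ofReal (pak d α k s ‖y‖) =
      (Ioi 0).indicator (fun s => ENNReal.ofReal (c * s ^ (α / 2 - 1))) s := by
    intro s
    unfold pak
    by_cases hs : 0 < s
    · have hpi := Real.pi_pos
      simp only [hs, if_true, mem_Ioi, indicator_of_mem]
      have e : ∀ y : Spc d, ENNReal.ofReal (s ^ (-((d : ℝ) + 2 - α) / 2) *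
          Real.exp (-(‖y‖ ^ 2) / (k * s))) = ENNReal.ofReal (s ^ (-((d : ℝ) + 2 - α) / 2)) *
          ENNReal.ofReal (Real.exp (-(k * s)⁻¹ * ‖y‖ ^ 2)) := by
        intro y
        rw [← ENNReal.ofReal_mul (by positivity)]
        congr 3
        field_simp
      simp_rw [e]
      rw [lintegral_const_mul _ (by fun_prop), gauss_lint d _ (by positivity),
        ← ENNReal.ofReal_mul (by positivity)]
      congr 1
      rw [div_inv_eq_mul, ← mul_assoc, Real.mul_rpow (by positivity) hs.le, mul_left_comm,
        ← Real.rpow_add hs]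
      congr 2
      ring
    · simp [hs]
  simp_rw [h1]
  rw [lintegral_indicator measurableSet_Ioi, Measure.restrict_restrict measurableSet_Ioi,
    Ioi_inter_Iic]
  have h2 : IntervalIntegrable (fun s : ℝ => s ^ (α / 2 - 1)) volume 0 T :=
    intervalIntegral.intervalIntegrable_rpow' (by linarith)
  have h3 := ((intervalIntegrable_iff_integrableOn_Ioc_of_le hT).1 h2).const_mul c
  exact lt_of_le_of_lt (lintegral_ofReal_le_lintegral_enorm _) h3.2

theorem stmt3 (d : ℕ) (hd : 1 ≤ d) (k : ℝ) (hk : 0 < k) (α : ℝ)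
    (hα0 : 0 < α) (hα : α ≤ (d : ℝ) + 2)
    (f : Pt d → ℝ) (hmeas : Measurable f) (hbd : ∃ M, ∀ z, |f z| ≤ M)
    (hsupp : HasCompactSupport f) :
    ∃ N : ℝ, 0 < N ∧ ∀ t : ℝ, ∀ x : Spc d,
      (∫⁻ w : Pt d, ENNReal.ofReal (pak d α k w.1 ‖w.2‖ * |f (t + w.1, x + w.2)|)) ≤
        ENNReal.ofReal (N * (1 + prho (t, x)) ^ (-((d : ℝ) + 2 - α))) := by
  obtain ⟨M₀, hM₀⟩ := hbd
  set M : ℝ := max M₀ 1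
  have hM : ∀ z, |f z| ≤ M := fun z => (hM₀ z).trans (le_max_left _ _)
  have hMp : 0 < M := lt_of_lt_of_le one_pos (le_max_right _ _)
  obtain ⟨R₀, hR₀⟩ := hsupp.isBounded.subset_closedBall (0 : Pt d)
  set R : ℝ := max R₀ 1
  have hR1 : 1 ≤ R := le_max_right _ _
  set K : Set (Pt d) := closedBall (0 : Pt d) R
  have hK : ∀ z, z ∉ K → f z = 0 := by
    intro z hz
    apply image_eq_zero_of_notMem_tsupport
    intro h
    exact hz (closedBall_subset_closedBall (le_max_left _ _) (hR₀ h))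
  have hKm : MeasurableSet K := measurableSet_closedBall
  have hKf : volume K < ∞ := (isCompact_closedBall (0 : Pt d) R).measure_lt_top
  have hKn : ∀ z ∈ K, |z.1| ≤ R ∧ ‖z.2‖ ≤ R := by
    intro z hz
    have h : ‖z‖ ≤ R := by simpa [K] using hz
    exact ⟨(norm_fst_le z).trans h, (norm_snd_le z).trans h⟩
  set β : ℝ := (d : ℝ) + 2 - α with hβ
  have hβ0 : 0 ≤ β := by linarith
  obtain ⟨C, hC, hCb⟩ := pak_bound d k hk α hα
  set A : ℝ := 4 * R + 1 with hA
  set T : ℝ := R + A ^ 2 with hT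
  have hJ := near_fin d k hk α hα0 T (by positivity)
  set J := ∫⁻ w in ({w : Pt d | w.1 ≤ T}), ENNReal.ofReal (pak d α k w.1 ‖w.2‖)
  set N₁ : ℝ := C * 2 ^ β * M * (volume K).toReal
  set N₂ : ℝ := M * J.toReal * (1 + A) ^ β
  have hN₁ : 0 ≤ N₁ := by positivity
  have hN₂ : 0 ≤ N₂ := by positivity
  refine ⟨N₁ + N₂ + 1, by positivity, fun t x => ?_⟩
  have hρ0 : 0 ≤ prho (t, x) := by unfold prho; positivity
  have hp0 : ∀ w : Pt d, 0 ≤ pak d α k w.1 ‖w.2‖ := by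
    intro w; unfold pak; split_ifs <;> positivity
  rcases le_total A (prho (t, x)) with hfar | hnear
  · -- far region
    set S : Set (Pt d) := (fun w => (t, x) + w) ⁻¹' K
    have hinv : (volume : Measure (Pt d)).IsAddLeftInvariant := by
      rw [Measure.volume_eq_prod]; infer_instance
    have hSv : volume S = volume K := measure_preimage_add volume (t, x) K
    have hSm : MeasurableSet S := (measurable_const_add _) hKm
    have hpt : ∀ w : Pt d, ENNReal.ofReal (pak d α k w.1 ‖w.2‖ * |f (t + w.1, x + w.2)|) ≤
        S.indicator (fun _ => ENNReal.ofReal (C * ((1 + prho (t, x)) / 2) ^ (-β) * M)) w := by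
      intro w
      by_cases hw : w ∈ S
      · rw [indicator_of_mem hw]
        apply ENNReal.ofReal_le_ofReal
        obtain ⟨h1, h2⟩ := hKn _ hw
        simp only [Prod.fst_add, Prod.snd_add] at h1 h2
        have h3 : ‖x‖ ≤ R + ‖w.2‖ := by
          calc ‖x‖ = ‖(x + w.2) - w.2‖ := by simp
            _ ≤ ‖x + w.2‖ + ‖w.2‖ := norm_sub_le _ _
            _ ≤ _ := by linarith
        have h4 : Real.sqrt |t| ≤ R + Real.sqrt |w.1| := by
          apply Real.sqrt_le_iff.2
          refine ⟨by positivity, ?_⟩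
          have h5 : |t| ≤ R + |w.1| := by
            calc |t| = |(t + w.1) - w.1| := by simp
              _ ≤ |t + w.1| + |w.1| := abs_sub _ _
              _ ≤ _ := by linarith
          have h6 := Real.sq_sqrt (abs_nonneg w.1)
          nlinarith [Real.sqrt_nonneg |w.1|, mul_nonneg (by linarith : 0 ≤ R) (Real.sqrt_nonneg |w.1|)]
        have h7 : (1 + prho (t, x)) / 2 ≤ ‖w.2‖ + Real.sqrt |w.1| := by
          have : prho (t, x) = ‖x‖ + Real.sqrt |t| := rfl
          linarith
        have h8 := hCb w.1 ‖w.2‖ _ (norm_nonneg _) (by positivity) h7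
        exact mul_le_mul h8 (hM _) (abs_nonneg _) (by positivity)
      · have : f (t + w.1, x + w.2) = 0 := hK _ hw
        simp [this]
    refine (lintegral_mono hpt).trans ?_
    rw [lintegral_indicator_const hSm, hSv, ← ENNReal.ofReal_toReal hKf.ne,
      ← ENNReal.ofReal_mul (by positivity)]
    apply ENNReal.ofReal_le_ofReal
    have e : ((1 + prho (t, x)) / 2) ^ (-β) = 2 ^ β * (1 + prho (t, x)) ^ (-β) := by
      rw [Real.div_rpow (by positivity) (by norm_num), Real.rpow_neg (by norm_num : (0:ℝ) ≤ 2),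
        div_inv_eq_mul, mul_comm]
    rw [e]
    calc C * (2 ^ β * (1 + prho (t, x)) ^ (-β)) * M * (volume K).toReal
        = N₁ * (1 + prho (t, x)) ^ (-β) := by ring
      _ ≤ _ := by gcongr; linarith
  · -- near region
    have hpt : ∀ w : Pt d, ENNReal.ofReal (pak d α k w.1 ‖w.2‖ * |f (t + w.1, x + w.2)|) ≤
        ENNReal.ofReal M * ({w : Pt d | w.1 ≤ T}).indicator
          (fun w => ENNReal.ofReal (pak d α k w.1 ‖w.2‖)) w := by
      intro w
      by_cases hw : (t + w.1, x + w.2) ∈ K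
      · have hwT : w ∈ ({w : Pt d | w.1 ≤ T}) := by
          obtain ⟨h1, -⟩ := hKn _ hw
          simp only at h1
          have h2 : Real.sqrt |t| ≤ A := by
            have : prho (t, x) = ‖x‖ + Real.sqrt |t| := rfl
            have := norm_nonneg x
            linarith
          have h3 : |t| ≤ A ^ 2 := (Real.sqrt_le_left (by positivity)).1 h2
          have h4 := (abs_le.1 h1).2
          have h5 := neg_abs_le t
          simp only [mem_ofPred_eq]
          linarith
        rw [indicator_of_mem hwT, ← ENNReal.ofReal_mul hMp.le, mul_comm M]
        apply ENNReal.ofReal_le_ofReal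
        exact mul_le_mul_of_nonneg_left (hM _) (hp0 w)
      · simp [hK _ hw]
    refine (lintegral_mono hpt).trans ?_
    have hTm : MeasurableSet ({w : Pt d | w.1 ≤ T}) := measurableSet_le measurable_fst measurable_const
    rw [lintegral_const_mul _ ((pak_meas d α k).ennreal_ofReal.indicator hTm),
      lintegral_indicator hTm]
    change ENNReal.ofReal M * J ≤ _
    rw [← ENNReal.ofReal_toReal hJ.ne, ← ENNReal.ofReal_mul hMp.le]
    apply ENNReal.ofReal_le_ofReal
    have h1 : (1 + A) ^ (-β) ≤ (1 + prho (t, x)) ^ (-β) :=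
      Real.rpow_le_rpow_of_nonpos (by positivity) (by linarith) (by linarith)
    have hAp : 0 < 1 + A := by positivity
    calc M * J.toReal = N₂ * (1 + A) ^ (-β) := by
          rw [Real.rpow_neg hAp.le]
          have : (1 + A) ^ β ≠ 0 := by positivity
          simp only [N₂]; field_simp
      _ ≤ (N₁ + N₂ + 1) * (1 + prho (t, x)) ^ (-β) := by
          gcongr; linarith
end
end
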